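/- For every n ≥ 1 and every vector a ∈ ℂ^n, the Toeplitz-plus-Hankel matrix of a is diagonalized by the DCT matrix: C_n · tph(a) · C_nᵀ = diag(d), where d = M_n a ∈ ℂ^n. -/

import Mathlib

open Matrix

noncomputable section

/-- The discrete cosine transform (DCT) matrix `C_n`. -/
def dctMatrix (n : ℕ) : Matrix (Fin n) (Fin n) ℝ :=
  Matrix.of fun i j =>
    Real.sqrt ((2 - if (i : ℕ) = 0 then (1 : ℝ) else 0) / n) *
      Real.cos ((i : ℕ) * (2 * (j : ℕ) + 1) * Real.pi / (2 * n))

/-- Toeplitz-plus-Hankel selector: entry `(i,j)` (0-based) of `T + H`, where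
`T_{i,j} = B_{|i−j|}` and (0-based) `H_{i,j} = B_{i+j+1}` if `i+j+2 ≤ m`,
`H_{i,j} = 0` if `i+j+2 = m+1`, and `H_{i,j} = B_{2m−1−(i+j)}` if `i+j+2 ≥ m+2`. -/
def thSelect {m : ℕ} {β : Type*} [AddCommMonoid β] (B : Fin m → β) (i j : Fin m) : β :=
  B ⟨(((i : ℕ) : ℤ) - ((j : ℕ) : ℤ)).natAbs, by
      have hi := i.isLt; have hj := j.isLt; omega⟩ +
  (if h1 : (i : ℕ) + (j : ℕ) + 2 ≤ m then
      B ⟨(i : ℕ) + (j : ℕ) + 1, by omega⟩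
   else if h2 : (i : ℕ) + (j : ℕ) + 2 = m + 1 then 0
   else
      B ⟨2 * m - 1 - ((i : ℕ) + (j : ℕ)), by
        have hi := i.isLt; have hj := j.isLt; omega⟩)

/-- The Toeplitz-plus-Hankel matrix `tph(a)` of a vector `a ∈ ℂ^n`. -/
def tph {n : ℕ} (a : Fin n → ℂ) : Matrix (Fin n) (Fin n) ℂ :=
  Matrix.of fun i j => thSelect a i j

/-- `W_n`: the diagonal matrix whose diagonal is the first column of `C_n`. -/
def Wmat (n : ℕ) : Matrix (Fin n) (Fin n) ℝ :=
  Matrix.diagonal fun i => dctMatrix n i ⟨0, i.pos⟩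

/-- `Z_n`: the upshift matrix, `(Z_n)_{i,i+1} = 1` and all other entries `0`. -/
def Zmat (n : ℕ) : Matrix (Fin n) (Fin n) ℝ :=
  Matrix.of fun i j => if (i : ℕ) + 1 = (j : ℕ) then 1 else 0

/-- `M_n = W_n⁻¹ C_n (I_n + Z_n)`. -/
def Mmat (n : ℕ) : Matrix (Fin n) (Fin n) ℝ :=
  (Wmat n)⁻¹ * dctMatrix n * (1 + Zmat n)

/-- the unnormalised cosine -/
def fcos (n p j : ℕ) : ℝ := Real.cos (p * (2 * j + 1) * Real.pi / (2 * n))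

def eig (n p k : ℕ) : ℝ := if k = 0 then 1 else 2 * Real.cos (p * k * Real.pi / n)

def jUp (n i k : ℕ) : ℕ := if i + k < n then i + k else 2 * n - 1 - i - k
def jDown (i k : ℕ) : ℕ := if k ≤ i then i - k else k - 1 - i

lemma fcos_up (n p i k : ℕ) (hi : i < n) (hk : k < n) :
    fcos n p (jUp n i k) = Real.cos (p * (2 * i + 1) * Real.pi / (2 * n) + p * k * Real.pi / n) := by
  have hn : (n : ℝ) ≠ 0 := by have : n ≠ 0 := by omega
                              exact_mod_cast this
  unfold fcos jUp
  split_ifs with h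
  · congr 1; push_cast; field_simp; ring
  · have e : ((2 * n - 1 - i - k : ℕ) : ℝ) = 2 * n - 1 - i - k := by
      rw [Nat.sub_sub, Nat.sub_sub, Nat.cast_sub (by omega)]; push_cast; ring
    rw [e, ← Real.cos_neg, ← Real.cos_add_nat_mul_two_pi _ p]
    congr 1; field_simp; ring

lemma fcos_down (n p i k : ℕ) (hi : i < n) (hk : k < n) :
    fcos n p (jDown i k) = Real.cos (p * (2 * i + 1) * Real.pi / (2 * n) - p * k * Real.pi / n) := by
  have hn : (n : ℝ) ≠ 0 := by have : n ≠ 0 := by omega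
                              exact_mod_cast this
  unfold fcos jDown
  split_ifs with h
  · rw [Nat.cast_sub h]; congr 1; field_simp; ring
  · have e : ((k - 1 - i : ℕ) : ℝ) = k - 1 - i := by
      rw [Nat.sub_sub, Nat.cast_sub (by omega)]; push_cast; ring
    rw [e, ← Real.cos_neg]
    congr 1; field_simp; ring

lemma fcos_sum (n p i k : ℕ) (hi : i < n) (hk : k < n) :
    fcos n p (jUp n i k) + fcos n p (jDown i k) = 2 * Real.cos (p * k * Real.pi / n) * fcos n p i := by
  rw [fcos_up n p i k hi hk, fcos_down n p i k hi hk, Real.cos_add, Real.cos_sub, fcos]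
  ring

def selE (n k i j : ℕ) : ℂ :=
  if k = 0 then (if j = i then 1 else 0)
  else (if j = jUp n i k then 1 else 0) + (if j = jDown i k then 1 else 0)

lemma thSelect_eq {n : ℕ} (a : Fin n → ℂ) (i j : Fin n) :
    thSelect a i j = ∑ k : Fin n, a k * selE n k i j := by
  have hi := i.isLt
  have hj := j.isLt
  have h1 : (if h1 : (i : ℕ) + (j : ℕ) + 2 ≤ n then
      a ⟨(i : ℕ) + (j : ℕ) + 1, by omega⟩
   else if h2 : (i : ℕ) + (j : ℕ) + 2 = n + 1 then 0
   else
      a ⟨2 * n - 1 - ((i : ℕ) + (j : ℕ)), by omega⟩)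
      = ∑ k : Fin n, if ((i:ℕ) + j + 1 = k ∨ (i:ℕ) + j + k + 1 = 2 * n) then a k else 0 := by
    split_ifs with h1 h2
    · rw [Finset.sum_eq_single ⟨(i : ℕ) + (j : ℕ) + 1, by omega⟩]
      · simp
      · intro b _ hb
        have hb' : (b : ℕ) ≠ i + j + 1 := fun h => hb (Fin.ext h)
        have := b.isLt
        rw [if_neg (by omega)]
      · simp
    · symm; apply Finset.sum_eq_zero
      intro b _
      have := b.isLt
      rw [if_neg (by omega)]
    · rw [Finset.sum_eq_single ⟨2 * n - 1 - ((i : ℕ) + (j : ℕ)), by omega⟩]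
      · rw [if_pos]; right; simp only; omega
      · intro b _ hb
        have hb' : (b : ℕ) ≠ 2 * n - 1 - ((i : ℕ) + (j : ℕ)) := fun h => hb (Fin.ext h)
        have := b.isLt
        rw [if_neg (by omega)]
      · simp
  have h2 : a ⟨(((i : ℕ) : ℤ) - ((j : ℕ) : ℤ)).natAbs, by omega⟩
      = ∑ k : Fin n, if (((i : ℕ) : ℤ) - ((j : ℕ) : ℤ)).natAbs = k then a k else 0 := by
    rw [Finset.sum_eq_single ⟨(((i : ℕ) : ℤ) - ((j : ℕ) : ℤ)).natAbs, by omega⟩]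
    · simp
    · intro b _ hb
      rw [if_neg (fun h => hb (Fin.ext h.symm))]
    · simp
  unfold thSelect
  rw [h1, h2, ← Finset.sum_add_distrib]
  refine Finset.sum_congr rfl fun k _ => ?_
  have hk := k.isLt
  unfold selE jUp jDown
  clear h1 h2
  generalize (k : ℕ) = k' at *
  generalize (i : ℕ) = i' at *
  generalize (j : ℕ) = j' at *
  split_ifs <;> first | (exfalso; omega) | ring

lemma sum_sel {n : ℕ} (p : ℕ) (i k : Fin n) :
    ∑ j : Fin n, selE n k i j * (fcos n p j : ℂ) = (eig n p k : ℂ) * (fcos n p i : ℂ) := by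
  have hi := i.isLt
  have hk := k.isLt
  have key : ∀ m : ℕ, m < n → ∑ j : Fin n, (if (j : ℕ) = m then (1:ℂ) else 0) * (fcos n p j : ℂ)
      = fcos n p m := by
    intro m hm
    rw [Finset.sum_eq_single ⟨m, hm⟩]
    · simp
    · intro b _ hb
      rw [if_neg (fun h => hb (Fin.ext h)), zero_mul]
    · simp
  unfold selE eig
  split_ifs with h
  · rw [key _ hi]; simp
  · simp only [add_mul, Finset.sum_add_distrib]
    rw [key _ (by unfold jUp; split_ifs <;> omega), key _ (by unfold jDown; split_ifs <;> omega)]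
    rw [← Complex.ofReal_add, fcos_sum n p i k hi hk]
    push_cast; ring

lemma eigvec {n : ℕ} (a : Fin n → ℂ) (p : ℕ) (i : Fin n) :
    ∑ j : Fin n, thSelect a i j * (fcos n p j : ℂ)
      = (∑ k : Fin n, (eig n p k : ℂ) * a k) * (fcos n p i : ℂ) := by
  simp only [thSelect_eq, Finset.sum_mul]
  rw [Finset.sum_comm]
  refine Finset.sum_congr rfl fun k _ => ?_
  simp only [mul_assoc]
  rw [← Finset.mul_sum, sum_sel]
  ring

lemma cos_ne (n p : ℕ) (hp : p < n) : fcos n p 0 ≠ 0 := by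
  have hn : (0 : ℝ) < n := by exact_mod_cast (by omega : 0 < n)
  have hp' : (p : ℝ) < n := by exact_mod_cast hp
  apply ne_of_gt
  unfold fcos
  apply Real.cos_pos_of_mem_Ioo
  have := Real.pi_pos
  constructor
  · have : (0:ℝ) ≤ p * (2 * (0:ℕ) + 1) * Real.pi / (2 * n) := by positivity
    linarith
  · rw [div_lt_div_iff₀ (by positivity) (by positivity)]
    push_cast
    nlinarith

def cnorm (n p : ℕ) : ℝ := Real.sqrt ((2 - if p = 0 then (1 : ℝ) else 0) / n)

lemma dct_apply {n : ℕ} (p j : Fin n) : dctMatrix n p j = cnorm n p * fcos n p j := rfl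

lemma cnorm_arg (n p : ℕ) (hn : 0 < n) : 0 < (2 - if p = 0 then (1 : ℝ) else 0) / n := by
  have hn : (0 : ℝ) < n := by exact_mod_cast hn
  split_ifs <;> norm_num <;> positivity

lemma Mmat_apply {n : ℕ} (p k : Fin n) : Mmat n p k = eig n p k := by
  have hpos : 0 < n := p.pos
  have hc : ∀ q : Fin n, dctMatrix n q ⟨0, q.pos⟩ ≠ 0 := fun q =>
    mul_ne_zero (Real.sqrt_pos.2 (cnorm_arg n q hpos)).ne' (cos_ne n q q.isLt)
  have hW : (Wmat n)⁻¹ = Matrix.diagonal fun q : Fin n => (dctMatrix n q ⟨0, q.pos⟩)⁻¹ := by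
    apply Matrix.inv_eq_right_inv
    unfold Wmat
    rw [Matrix.diagonal_mul_diagonal, ← Matrix.diagonal_one]
    congr 1; funext q
    exact mul_inv_cancel₀ (hc q)
  unfold Mmat
  rw [hW, Matrix.mul_assoc, Matrix.diagonal_mul, inv_mul_eq_iff_eq_mul₀ (hc p), Matrix.mul_add,
    Matrix.mul_one, Matrix.add_apply]
  have hZ : (dctMatrix n * Zmat n) p k = if (k : ℕ) = 0 then 0 else cnorm n p * fcos n p (k - 1) := by
    rw [Matrix.mul_apply]
    have hk := k.isLt
    split_ifs with h
    · apply Finset.sum_eq_zero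
      intro j _
      simp [Zmat, h]
    · rw [Finset.sum_eq_single ⟨k - 1, by omega⟩]
      · simp only [Zmat, Matrix.of_apply]
        rw [if_pos (by omega), mul_one, dct_apply]
      · intro b _ hb
        have : (b : ℕ) ≠ k - 1 := fun h => hb (Fin.ext h)
        simp only [Zmat, Matrix.of_apply]
        rw [if_neg (by omega), mul_zero]
      · simp
  rw [hZ, dct_apply, dct_apply]
  unfold eig
  split_ifs with h
  · simp [h]
  · have := fcos_sum n p 0 k hpos k.isLt
    have e1 : jUp n 0 k = k := by unfold jUp; rw [if_pos (by omega)]; omega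
    have e2 : jDown 0 k = k - 1 := by unfold jDown; rw [if_neg (by omega)]; omega
    rw [e1, e2] at this
    simp only
    linear_combination cnorm n p * this

lemma sum_cos (n : ℕ) (x : ℝ) :
    (∑ j ∈ Finset.range n, Real.cos ((2 * j + 1) * x)) * (2 * Real.sin x) = Real.sin (2 * n * x) := by
  induction n with
  | zero => simp
  | succ m ih =>
    rw [Finset.sum_range_succ, add_mul, ih]
    have e1 : 2 * ((m + 1 : ℕ) : ℝ) * x = (2 * m + 1) * x + x := by push_cast; ring
    have e2 : 2 * (m : ℝ) * x = (2 * m + 1) * x - x := by ring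
    rw [e1, e2, Real.sin_add, Real.sin_sub]; ring

lemma sum_cos_zero (n : ℕ) (r : ℤ) (h0 : r ≠ 0) (h1 : |r| < 2 * n) :
    ∑ j ∈ Finset.range n, Real.cos ((2 * j + 1) * (r * Real.pi / (2 * n))) = 0 := by
  have hn : (n : ℝ) ≠ 0 := by
    rintro h
    have : n = 0 := by exact_mod_cast h
    subst this
    have := abs_nonneg r
    simp at h1; omega
  have h := sum_cos n (r * Real.pi / (2 * n))
  have e : 2 * (n : ℝ) * (r * Real.pi / (2 * n)) = r * Real.pi := by field_simp
  rw [e, Real.sin_int_mul_pi] at h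
  rcases mul_eq_zero.1 h with h | h
  · exact h
  · exfalso
    have hs : Real.sin (r * Real.pi / (2 * n)) = 0 := by linarith
    obtain ⟨m, hm⟩ := Real.sin_eq_zero_iff.1 hs
    have hr : (r : ℝ) = m * (2 * n) := by
      have := Real.pi_ne_zero
      field_simp at hm
      linarith
    have hr' : r = m * (2 * n) := by exact_mod_cast hr
    have hd : (2 * n : ℤ) ∣ r := ⟨m, by rw [hr']; ring⟩
    exact h0 (Int.eq_zero_of_abs_lt_dvd hd h1)

lemma dct_orth (n : ℕ) : dctMatrix n * (dctMatrix n)ᵀ = 1 := by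
  ext p q
  have hpos : 0 < n := p.pos
  have hn : (n : ℝ) ≠ 0 := by exact_mod_cast hpos.ne'
  have hp := p.isLt
  have hq := q.isLt
  rw [Matrix.mul_apply]
  simp only [Matrix.transpose_apply, dct_apply]
  have e : ∀ j : Fin n, cnorm n p * fcos n p j * (cnorm n q * fcos n q j) =
      cnorm n p * cnorm n q / 2 *
        (Real.cos ((2 * (j : ℕ) + 1) * ((((p : ℕ) : ℤ) - ((q : ℕ) : ℤ) : ℤ) * Real.pi / (2 * n))) +
         Real.cos ((2 * (j : ℕ) + 1) * ((((p : ℕ) : ℤ) + ((q : ℕ) : ℤ) : ℤ) * Real.pi / (2 * n)))) := by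
    intro j
    have e1 : (2 * ((j : ℕ) : ℝ) + 1) * ((((p : ℕ) : ℤ) - ((q : ℕ) : ℤ) : ℤ) * Real.pi / (2 * n))
      = (p : ℕ) * (2 * (j : ℕ) + 1) * Real.pi / (2 * n) - (q : ℕ) * (2 * (j : ℕ) + 1) * Real.pi / (2 * n) := by
      push_cast; ring
    have e2 : (2 * ((j : ℕ) : ℝ) + 1) * ((((p : ℕ) : ℤ) + ((q : ℕ) : ℤ) : ℤ) * Real.pi / (2 * n))
      = (p : ℕ) * (2 * (j : ℕ) + 1) * Real.pi / (2 * n) + (q : ℕ) * (2 * (j : ℕ) + 1) * Real.pi / (2 * n) := by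
      push_cast; ring
    rw [e1, e2, Real.cos_add, Real.cos_sub, fcos, fcos]; ring
  simp only [e]
  rw [← Finset.mul_sum, Finset.sum_add_distrib,
    Fin.sum_univ_eq_sum_range (fun j : ℕ => Real.cos ((2 * (j : ℝ) + 1) * ((((p : ℕ) : ℤ) - ((q : ℕ) : ℤ) : ℤ) * Real.pi / (2 * n)))),
    Fin.sum_univ_eq_sum_range (fun j : ℕ => Real.cos ((2 * (j : ℝ) + 1) * ((((p : ℕ) : ℤ) + ((q : ℕ) : ℤ) : ℤ) * Real.pi / (2 * n))))]
  by_cases hpq : p = q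
  · subst hpq
    have hsq : cnorm n p * cnorm n p = (2 - if (p : ℕ) = 0 then (1 : ℝ) else 0) / n :=
      Real.mul_self_sqrt (cnorm_arg n p hpos).le
    rw [hsq, Matrix.one_apply_eq]
    by_cases h0 : (p : ℕ) = 0
    · simp [h0]; field_simp; norm_num
    · rw [sum_cos_zero n (((p : ℕ) : ℤ) + ((p : ℕ) : ℤ)) (by omega) (by rw [abs_lt]; omega)]
      simp [h0]; field_simp
  · have hpq' : (p : ℕ) ≠ q := fun h => hpq (Fin.ext h)
    rw [sum_cos_zero n (((p : ℕ) : ℤ) + ((q : ℕ) : ℤ)) (by omega) (by rw [abs_lt]; omega),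
      sum_cos_zero n (((p : ℕ) : ℤ) - ((q : ℕ) : ℤ)) (by omega) (by rw [abs_lt]; omega),
      Matrix.one_apply_ne hpq]
    simp

/-- For every `n ≥ 1` and `a ∈ ℂ^n`:  `C_n · tph(a) · C_nᵀ = diag(M_n a)`. -/
theorem dct_diagonalizes_tph (n : ℕ) (hn : 1 ≤ n) (a : Fin n → ℂ) :
    (dctMatrix n).map (Complex.ofReal) * tph a * ((dctMatrix n).map (Complex.ofReal))ᵀ
      = Matrix.diagonal ((Mmat n).map (Complex.ofReal) *ᵥ a) := by
  have h1 : tph a * ((dctMatrix n).map (Complex.ofReal))ᵀ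
      = ((dctMatrix n).map (Complex.ofReal))ᵀ * Matrix.diagonal ((Mmat n).map (Complex.ofReal) *ᵥ a) := by
    ext i p
    rw [Matrix.mul_diagonal, Matrix.mul_apply]
    simp only [tph, Matrix.of_apply, Matrix.transpose_apply, Matrix.map_apply, dct_apply,
      Matrix.mulVec, dotProduct, Mmat_apply, Complex.ofReal_mul]
    have := eigvec a p i
    calc _ = (cnorm n p : ℂ) * ∑ j : Fin n, thSelect a i j * (fcos n p j : ℂ) := by
          rw [Finset.mul_sum]
          exact Finset.sum_congr rfl fun j _ => by ring
      _ = _ := by rw [this]; ring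
  have h2 : (dctMatrix n).map (Complex.ofReal) * ((dctMatrix n).map (Complex.ofReal))ᵀ = 1 := by
    have := congrArg (fun A : Matrix (Fin n) (Fin n) ℝ => A.map Complex.ofRealHom) (dct_orth n)
    simp only [Matrix.map_mul] at this
    rw [Matrix.map_one _ (map_zero _) (map_one _)] at this
    exact this
  rw [Matrix.mul_assoc, h1, ← Matrix.mul_assoc, h2, Matrix.one_mul]
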